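/- Let n ≥ 5 and let G be the n×n toroidal chess graph. In the game of Cops and Robbers on G with exactly two cops, both knights, and a robber on foot, the robber has a winning strategy; that is, with knight cops and a foot robber, c(G) > 2. -/

import Mathlib

/-- Vertices of the `n × n` toroidal chess graph: pairs of coordinates mod `n`. -/
abbrev V (n : ℕ) : Type := ZMod n × ZMod n

/-- "On foot" moves (toroidal grid adjacency): the target differs from the current
vertex by `(±1,0)` or `(0,±1)` mod `n`. -/
def footMove (n : ℕ) (v w : V n) : Prop :=
  w - v = (1, 0) ∨ w - v = (-1, 0) ∨ w - v = (0, 1) ∨ w - v = (0, -1)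

/-- Knight moves: the target differs from the current vertex by `(±1,±2)` or
`(±2,±1)` mod `n`. -/
def knightMove (n : ℕ) (v w : V n) : Prop :=
  w - v = (1, 2) ∨ w - v = (1, -2) ∨ w - v = (-1, 2) ∨ w - v = (-1, -2) ∨
    w - v = (2, 1) ∨ w - v = (2, -1) ∨ w - v = (-2, 1) ∨ w - v = (-2, -1)

/-- One turn of a piece with allowable-move relation `R`: either stay on the current
vertex or move to an allowable vertex. -/
def stayOr {α : Type*} (R : α → α → Prop) (v w : α) : Prop := w = v ∨ R v w

/-- `CopsWin copMove robMove c r t` holds when, from the position in which the `k`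
cops occupy the vertices `c : Fin k → V n` (cop `i` moving by the relation
`copMove i`), the robber (moving by `robMove`) occupies `r`, and it is the cops'
turn iff `t = true`, the cops can force that after finitely many turns some cop
occupies the robber's vertex.  On the cops' turn every cop simultaneously either
stays or makes an allowable move; likewise for the robber on his turn. -/
inductive CopsWin {n k : ℕ} (copMove : Fin k → V n → V n → Prop)
    (robMove : V n → V n → Prop) : (Fin k → V n) → V n → Bool → Prop
  | caught {c : Fin k → V n} {r : V n} {t : Bool} (h : ∃ i, c i = r) :
      CopsWin copMove robMove c r t
  | copsTurn {c : Fin k → V n} {r : V n} (c' : Fin k → V n)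
      (h : ∀ i, stayOr (copMove i) (c i) (c' i))
      (hw : CopsWin copMove robMove c' r false) : CopsWin copMove robMove c r true
  | robTurn {c : Fin k → V n} {r : V n}
      (hw : ∀ r', stayOr robMove r r' → CopsWin copMove robMove c r' true) :
      CopsWin copMove robMove c r false

/-- The `k` cops have a winning strategy: they can choose starting vertices
(repetitions allowed) so that, whatever starting vertex the robber then chooses,
the cops (moving first) can force a capture in finitely many turns. -/
def CopsHaveWinningStrategy {n : ℕ} (k : ℕ) (copMove : Fin k → V n → V n → Prop)
    (robMove : V n → V n → Prop) : Prop :=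
  ∃ c : Fin k → V n, ∀ r : V n, CopsWin copMove robMove c r true

/-- The cop number of the `n × n` toroidal chess graph, for the game in which,
when there are `k` cops, cop `i` moves by the relation `copMove k i` and the
robber moves by `robMove`: the minimum number of cops having a winning strategy. -/
noncomputable def copNumber (n : ℕ) (copMove : ∀ k, Fin k → V n → V n → Prop)
    (robMove : V n → V n → Prop) : ℕ :=
  sInf {k | CopsHaveWinningStrategy k (copMove k) robMove}

/-!
A knight standing off the robber's vertex occupies or attacks at most two of the five vertices that
the robber can reach in one turn (his own and its four neighbours). Two knights thus spoil at most
four of the five, so an uncaught robber always has a turn after which he cannot be captured at once.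
The same turn, made from any unoccupied vertex, gives him a safe starting vertex.

A knight matters to the robber only if it stands at a displacement `s - t` from him, where `s` is a
foot step and `t` a knight step. These displacements have coordinates in `[-3, 3]`, so for `n ≥ 7`
reduction mod `n` identifies no two of them and the bound of two can be checked on the infinite
board. For `n = 5` and `n = 6` it is checked on the torus itself.
-/

section Game

variable {n k : ℕ} {copMove : Fin k → V n → V n → Prop} {robMove : V n → V n → Prop}

/-- The robber can evade the cops for one more round: from every position in which he is not yet
caught he has a turn after which no cop can reach him on the cops' next turn. -/
def RobberCanEvade (copMove : Fin k → V n → V n → Prop) (robMove : V n → V n → Prop) : Prop :=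
  ∀ (c : Fin k → V n) (r : V n), (∀ i, c i ≠ r) →
    ∃ r', stayOr robMove r r' ∧ ∀ i, ¬ stayOr (copMove i) (c i) r'

/-- The cops capture with no further robber move: on their turn (`true`) some cop can reach the
robber's vertex, on the robber's turn (`false`) some cop already occupies it. -/
def CaptureAtOnce (copMove : Fin k → V n → V n → Prop) (c : Fin k → V n) (r : V n) : Bool → Prop
  | true => ∃ i, stayOr (copMove i) (c i) r
  | false => ∃ i, c i = r

lemma CopsWin.captureAtOnce (hevade : RobberCanEvade copMove robMove) {c : Fin k → V n} {r : V n}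
    {t : Bool} (hwin : CopsWin copMove robMove c r t) : CaptureAtOnce copMove c r t := by
  induction hwin with
  | @caught c r t hcaught =>
    obtain ⟨i, hi⟩ := hcaught
    cases t
    · exact ⟨i, hi⟩
    · exact ⟨i, .inl hi.symm⟩
  | copsTurn c' hmove _ ih =>
    obtain ⟨i, hi⟩ := ih
    exact ⟨i, hi ▸ hmove i⟩
  | @robTurn c r _ ih =>
    by_contra! hfree
    obtain ⟨r', hr', hsafe⟩ := hevade c r (not_exists.1 hfree)
    obtain ⟨i, hi⟩ := ih r' hr'
    exact hsafe i hi

lemma RobberCanEvade.not_copsHaveWinningStrategy [NeZero n] (hk : k < n ^ 2)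
    (hevade : RobberCanEvade copMove robMove) : ¬ CopsHaveWinningStrategy k copMove robMove := by
  rintro ⟨c, hwin⟩
  have hcard : Fintype.card (Fin k) < Fintype.card (V n) := by
    simpa only [Fintype.card_fin, Fintype.card_prod, ZMod.card, ← sq] using hk
  obtain ⟨r, hr⟩ : ∃ r, ∀ i, c i ≠ r := by
    simpa [Function.Surjective] using mt (Fintype.card_le_of_surjective c) hcard.not_ge
  obtain ⟨r', -, hsafe⟩ := hevade c r hr
  obtain ⟨i, hi⟩ := (hwin r').captureAtOnce hevade
  exact hsafe i hi

lemma copsHaveWinningStrategy_card [NeZero n]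
    (copMove : Fin (Fintype.card (V n)) → V n → V n → Prop) (robMove : V n → V n → Prop) :
    CopsHaveWinningStrategy (Fintype.card (V n)) copMove robMove :=
  ⟨(Fintype.equivFin (V n)).symm, fun r => .caught ⟨Fintype.equivFin (V n) r, by simp⟩⟩

lemma lt_copNumber_of_forall_not_copsHaveWinningStrategy [NeZero n]
    {copMove : ∀ k, Fin k → V n → V n → Prop} {m : ℕ}
    (hlose : ∀ k ≤ m, ¬ CopsHaveWinningStrategy k (copMove k) robMove) :
    m < copNumber n copMove robMove := by
  -- The infimum of an empty set of naturals would be `0`.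
  have hnonempty : {k | CopsHaveWinningStrategy k (copMove k) robMove}.Nonempty :=
    ⟨_, copsHaveWinningStrategy_card (copMove _) robMove⟩
  exact not_le.1 fun hle => hlose _ hle (Nat.sInf_mem hnonempty)

end Game

section Steps

/-- The displacements of a piece on foot in one turn, staying included. -/
def footSteps : Finset (ℤ × ℤ) := {0, (1, 0), (-1, 0), (0, 1), (0, -1)}

/-- The displacements of a knight in one turn, staying included. -/
def knightSteps : Finset (ℤ × ℤ) :=
  {0, (1, 2), (1, -2), (-1, 2), (-1, -2), (2, 1), (2, -1), (-2, 1), (-2, -1)}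

/-- Reduction mod `n`, the covering of the torus by the infinite board. -/
def toTorus (n : ℕ) : ℤ × ℤ →+ V n :=
  (Int.castAddHom (ZMod n)).prodMap (Int.castAddHom (ZMod n))

lemma toTorus_mk (n : ℕ) (a b : ℤ) : toTorus n (a, b) = ((a : ZMod n), (b : ZMod n)) := rfl

lemma stayOr_footMove_iff {n : ℕ} {v w : V n} :
    stayOr (footMove n) v w ↔ ∃ s ∈ footSteps, w - v = toTorus n s := by
  simp [stayOr, footMove, footSteps, toTorus_mk, sub_eq_zero]

lemma stayOr_knightMove_iff {n : ℕ} {v w : V n} :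
    stayOr (knightMove n) v w ↔ ∃ t ∈ knightSteps, w - v = toTorus n t := by
  simp [stayOr, knightMove, knightSteps, toTorus_mk, sub_eq_zero]

lemma toTorus_injOn_Icc {n m : ℕ} (hm : 2 * m < n) :
    Set.InjOn (toTorus n) (Set.Icc (-m) m) := by
  have cast_inj {a b : ℤ} (ha : -m ≤ a ∧ a ≤ m) (hb : -m ≤ b ∧ b ≤ m)
      (hab : (a : ZMod n) = b) : a = b := by
    have hdvd : (n : ℤ) ∣ b - a := (ZMod.intCast_eq_intCast_iff_dvd_sub a b n).1 hab
    have hzero : b - a = 0 := Int.eq_zero_of_abs_lt_dvd hdvd (by rw [abs_lt]; omega)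
    omega
  rintro z ⟨hz, hz'⟩ w ⟨hw, hw'⟩ hzw
  exact Prod.ext (cast_inj ⟨hz.1, hz'.1⟩ ⟨hw.1, hw'.1⟩ (congrArg Prod.fst hzw))
    (cast_inj ⟨hz.2, hz'.2⟩ ⟨hw.2, hw'.2⟩ (congrArg Prod.snd hzw))

end Steps

section Guarding

variable {A : Type*} [DecidableEq A]

/-- The foot steps of a robber that end on a vertex which a knight at displacement `d` from him
occupies or attacks. The board is the image of the infinite board under `π`: the identity gives the
infinite board itself, `toTorus n` the torus. -/
def guardedSteps (π : ℤ × ℤ → A) (d : A) : Finset (ℤ × ℤ) :=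
  {s ∈ footSteps | ∃ t ∈ knightSteps, π (s - t) = d}

lemma footSteps_sub_knightSteps_mem_Icc :
    ∀ s ∈ footSteps, ∀ t ∈ knightSteps, s - t ∈ Set.Icc (-3 : ℤ × ℤ) 3 := by
  decide +kernel

lemma card_guardedSteps_id_sub_le_two :
    ∀ s ∈ footSteps, ∀ t ∈ knightSteps, s - t ≠ 0 → (guardedSteps id (s - t)).card ≤ 2 := by
  decide +kernel

lemma guardedSteps_subset_guardedSteps_id {π : ℤ × ℤ → A} (hπ : Set.InjOn π (Set.Icc (-3) 3))
    {z : ℤ × ℤ} (hz : z ∈ Set.Icc (-3) 3) : guardedSteps π (π z) ⊆ guardedSteps id z := by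
  intro s hs
  obtain ⟨hsfoot, t, ht, hst⟩ := Finset.mem_filter.1 hs
  exact Finset.mem_filter.2
    ⟨hsfoot, t, ht, hπ (footSteps_sub_knightSteps_mem_Icc s hsfoot t ht) hz hst⟩

lemma card_guardedSteps_le_two_of_injOn {π : ℤ × ℤ → A} (hπ : Set.InjOn π (Set.Icc (-3) 3))
    {d : A} (hd : d ≠ π 0) : (guardedSteps π d).card ≤ 2 := by
  obtain hempty | ⟨s, hs⟩ := (guardedSteps π d).eq_empty_or_nonempty
  · simp [hempty]
  · obtain ⟨hsfoot, t, ht, rfl⟩ := Finset.mem_filter.1 hs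
    have hst : s - t ≠ 0 := ne_of_apply_ne π hd
    exact (Finset.card_le_card <| guardedSteps_subset_guardedSteps_id hπ <|
      footSteps_sub_knightSteps_mem_Icc s hsfoot t ht).trans
        (card_guardedSteps_id_sub_le_two s hsfoot t ht hst)

lemma card_guardedSteps_toTorus_le_two {n : ℕ} (hn : 5 ≤ n) {d : V n} (hd : d ≠ 0) :
    (guardedSteps (toTorus n) d).card ≤ 2 := by
  obtain hsmall | hlarge := Nat.lt_or_ge n 7
  · revert d
    interval_cases n <;> decide +kernel
  · exact card_guardedSteps_le_two_of_injOn (toTorus_injOn_Icc (m := 3) (by omega))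
      (by rwa [map_zero])

lemma mem_guardedSteps_of_stayOr_knightMove {n : ℕ} {v r : V n} {s : ℤ × ℤ} (hs : s ∈ footSteps)
    (hreach : stayOr (knightMove n) v (r + toTorus n s)) :
    s ∈ guardedSteps (toTorus n) (v - r) := by
  obtain ⟨t, ht, hst⟩ := stayOr_knightMove_iff.1 hreach
  refine Finset.mem_filter.2 ⟨hs, t, ht, ?_⟩
  rw [map_sub, ← hst]
  abel

end Guarding

lemma robberCanEvade_knightMove_footMove {n k : ℕ} (hn : 5 ≤ n) (hk : k ≤ 2) :
    RobberCanEvade (fun _ : Fin k => knightMove n) (footMove n) := by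
  intro c r hfree
  let guarded := Finset.univ.biUnion fun i => guardedSteps (toTorus n) (c i - r)
  have hcard : guarded.card < footSteps.card :=
    calc guarded.card
      _ ≤ (Finset.univ : Finset (Fin k)).card * 2 :=
        Finset.card_biUnion_le_card_mul _ _ _ fun i _ =>
          card_guardedSteps_toTorus_le_two hn (sub_ne_zero.2 (hfree i))
      _ ≤ 2 * 2 := by gcongr; simpa using hk
      _ < footSteps.card := by decide
  obtain ⟨s, hs, hunguarded⟩ := Finset.exists_mem_notMem_of_card_lt_card hcard
  refine ⟨r + toTorus n s, stayOr_footMove_iff.2 ⟨s, hs, by abel⟩, fun i hreach => hunguarded ?_⟩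
  exact Finset.mem_biUnion.2
    ⟨i, Finset.mem_univ i, mem_guardedSteps_of_stayOr_knightMove hs hreach⟩

/-- For `n ≥ 5`, on the `n × n` toroidal chess graph with exactly
two cops, both knights, and a robber on foot, the robber has a winning strategy
(the two cops do not); that is, with knight cops and a foot robber, `c(G) > 2`. -/
theorem two_knight_cops_lose_to_foot_robber (n : ℕ) (hn : 5 ≤ n) :
    ¬ CopsHaveWinningStrategy 2 (fun _ : Fin 2 => knightMove n) (footMove n) ∧
    2 < copNumber n (fun _ _ => knightMove n) (footMove n) := by
  have : NeZero n := ⟨by omega⟩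
  have hlose (k : ℕ) (hk : k ≤ 2) :
      ¬ CopsHaveWinningStrategy k (fun _ : Fin k => knightMove n) (footMove n) :=
    (robberCanEvade_knightMove_footMove hn hk).not_copsHaveWinningStrategy (by nlinarith)
  exact ⟨hlose 2 le_rfl, lt_copNumber_of_forall_not_copsHaveWinningStrategy hlose⟩
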